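/- Let n ≥ 3, 0 < μ < n, and set 2_μ^* = (2n−μ)/(n−2). Let δ > 0 and let ψ : ℝⁿ → ℝ be a smooth function with 0 ≤ ψ ≤ 1 on ℝⁿ, ψ ≡ 1 on the closed ball of radius δ centered at 0, and ψ ≡ 0 outside the open ball of radius 2δ centered at 0. For ε ∈ (0,1) define U_ε : ℝⁿ → ℝ by U_ε(x) = ( ε / (ε² + ‖x‖²) )^{(n−2)/2} and set u_ε = ψ·U_ε. Then there exists C > 0 such that for every ε ∈ (0,1), | ∫_{ℝⁿ}∫_{ℝⁿ} u_ε(x)^{2_μ^*} u_ε(y)^{2_μ^*} / ‖x−y‖^μ dx dy − ∫_{ℝⁿ}∫_{ℝⁿ} U_1(x)^{2_μ^*} U_1(y)^{2_μ^*} / ‖x−y‖^μ dx dy | ≤ C ε^{n}. -/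

import Mathlib

open MeasureTheory ENNReal

noncomputable section

/-- Critical power of the standard bubble. -/
def bubV (n : ℕ) (μ : ℝ) (x : EuclideanSpace ℝ (Fin n)) : ℝ :=
  (1 + ‖x‖ ^ 2) ^ (-(2 * (n : ℝ) - μ) / 2)

/-- Truncated Riesz kernel. -/
def bubG (n : ℕ) (μ : ℝ) (x : EuclideanSpace ℝ (Fin n)) : ℝ :=
  if ‖x‖ < 1 then ‖x‖ ^ (-μ) else 0

/-- Tail function. -/
def bubT (n : ℕ) (x : EuclideanSpace ℝ (Fin n)) : ℝ :=
  if 1 < ‖x‖ then ‖x‖ ^ (-(2 * (n : ℝ))) else 0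

/-- Choquard integrand on the product. -/
def bubK (n : ℕ) (μ : ℝ) (z : EuclideanSpace ℝ (Fin n) × EuclideanSpace ℝ (Fin n)) : ℝ :=
  bubV n μ z.1 * bubV n μ z.2 * ‖z.1 - z.2‖ ^ (-μ)

lemma bubV_pos (n : ℕ) (μ : ℝ) (x : EuclideanSpace ℝ (Fin n)) : 0 < bubV n μ x := by
  unfold bubV; positivity

lemma bubV_le_one (n : ℕ) (μ : ℝ) (hμn : μ < n) (x : EuclideanSpace ℝ (Fin n)) :
    bubV n μ x ≤ 1 := by
  unfold bubV
  apply Real.rpow_le_one_of_one_le_of_nonpos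
  · nlinarith [sq_nonneg ‖x‖]
  · have : (0:ℝ) ≤ n := n.cast_nonneg
    linarith

lemma bubV_le (n : ℕ) (μ : ℝ) (hμn : μ < n) (x : EuclideanSpace ℝ (Fin n)) (r : ℝ) (hr : 0 < r)
    (h : r ≤ ‖x‖) : bubV n μ x ≤ r ^ (-(2 * (n : ℝ) - μ)) := by
  unfold bubV
  have hn : (0:ℝ) ≤ n := n.cast_nonneg
  have h1 : r ^ (-(2 * (n : ℝ) - μ)) = (r ^ 2) ^ (-(2 * (n : ℝ) - μ) / 2) := by
    rw [← Real.rpow_natCast_mul hr.le]; congr 1; push_cast; ring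
  rw [h1]
  apply Real.rpow_le_rpow_of_nonpos (by positivity)
  · nlinarith
  · linarith

lemma bubV_measurable (n : ℕ) (μ : ℝ) : Measurable (bubV n μ) := by
  unfold bubV; fun_prop

lemma bubG_nonneg (n : ℕ) (μ : ℝ) (x : EuclideanSpace ℝ (Fin n)) : 0 ≤ bubG n μ x := by
  unfold bubG; split_ifs <;> positivity

lemma bubT_nonneg (n : ℕ) (x : EuclideanSpace ℝ (Fin n)) : 0 ≤ bubT n x := by
  unfold bubT; split_ifs <;> positivity

lemma bubK_nonneg (n : ℕ) (μ : ℝ) (z) : 0 ≤ bubK n μ z := by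
  have := (bubV_pos n μ z.1).le
  have := (bubV_pos n μ z.2).le
  unfold bubK; positivity

lemma bubK_measurable (n : ℕ) (μ : ℝ) : Measurable (bubK n μ) := by
  have := bubV_measurable n μ
  unfold bubK; fun_prop

lemma bubV_integrable (n : ℕ) (μ : ℝ) (hμn : μ < n) : Integrable (bubV n μ) := by
  have := integrable_rpow_neg_one_add_norm_sq (E := EuclideanSpace ℝ (Fin n)) (μ := volume)
    (r := 2 * (n : ℝ) - μ) (by simp; linarith)
  exact this

lemma bubG_integrable (n : ℕ) (hn : 1 ≤ n) (μ : ℝ) (hμn : μ < n) : Integrable (bubG n μ) := by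
  have h : IntegrableOn (fun x : EuclideanSpace ℝ (Fin n) => ‖x‖ ^ (-μ)) (Metric.ball 0 1) := by
    apply integrableOn_ball_of_norm_le_rpow (C := 1) (α := μ) (by simpa using hn) (by simpa using hμn)
    · refine Filter.Eventually.of_forall fun x => ?_
      rw [Real.norm_of_nonneg (by positivity)]; simp
    · exact Measurable.aestronglyMeasurable (by fun_prop)
  rw [← integrable_indicator_iff Metric.isOpen_ball.measurableSet] at h
  refine h.congr (Filter.Eventually.of_forall fun x => ?_)
  simp [bubG, Set.indicator]

lemma bubT_integrable (n : ℕ) (hn : 1 ≤ n) : Integrable (bubT n) := by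
  have hn' : (1:ℝ) ≤ n := by exact_mod_cast hn
  have h := (integrable_one_add_norm (E := EuclideanSpace ℝ (Fin n)) (μ := volume)
    (r := 2 * (n : ℝ)) (by simp; linarith)).const_mul ((2:ℝ) ^ (2 * (n:ℝ)))
  refine h.mono' ?_ (Filter.Eventually.of_forall fun x => ?_)
  · refine Measurable.aestronglyMeasurable ?_
    unfold bubT
    exact Measurable.ite (measurableSet_lt measurable_const measurable_norm) (by fun_prop) (by fun_prop)
  · rw [Real.norm_of_nonneg (bubT_nonneg n x)]
    unfold bubT
    split_ifs with h1
    · have : (2:ℝ) ^ (2 * (n:ℝ)) = (2⁻¹) ^ (-(2 * (n:ℝ))) := by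
        rw [Real.inv_rpow (by norm_num), Real.rpow_neg (by norm_num), inv_inv]
      rw [this, ← Real.mul_rpow (by norm_num) (by positivity)]
      apply Real.rpow_le_rpow_of_nonpos (by positivity) <;> linarith
    · positivity

lemma bubK_integrable (n : ℕ) (hn : 1 ≤ n) (μ : ℝ) (hμ0 : 0 < μ) (hμn : μ < n) :
    Integrable (bubK n μ) (volume.prod volume) := by
  have hV := bubV_integrable n μ hμn
  have h1 := hV.convolution_integrand (ContinuousLinearMap.mul ℝ ℝ) (bubG_integrable n hn μ hμn)
  have h2 := hV.mul_prod hV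
  refine (h1.add h2).mono' (bubK_measurable n μ).aestronglyMeasurable
    (Filter.Eventually.of_forall fun z => ?_)
  rw [Real.norm_of_nonneg (bubK_nonneg n μ z)]
  simp only [Pi.add_apply, ContinuousLinearMap.mul_apply']
  have p1 := bubV_pos n μ z.1
  have p2 := bubV_pos n μ z.2
  have q1 := bubV_le_one n μ hμn z.1
  unfold bubK bubG
  split_ifs with h
  · have e : 0 ≤ ‖z.1 - z.2‖ ^ (-μ) := by positivity
    nlinarith [mul_le_mul_of_nonneg_right q1 (mul_nonneg p2.le e), mul_pos p1 p2]
  · have e : ‖z.1 - z.2‖ ^ (-μ) ≤ 1 :=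
      Real.rpow_le_one_of_one_le_of_nonpos (not_lt.1 h) (by linarith)
    nlinarith [mul_le_mul_of_nonneg_left e (mul_pos p1 p2).le]

lemma bubW_bound (n : ℕ) (hn : 1 ≤ n) (μ : ℝ) (hμ0 : 0 < μ) (hμn : μ < n) (δ : ℝ) (hδ : 0 < δ) :
    ∃ C : ℝ, 0 ≤ C ∧ ∀ x : EuclideanSpace ℝ (Fin n), δ ≤ ‖x‖ →
      ∫ y, bubV n μ y * ‖x - y‖ ^ (-μ) ≤ C * ‖x‖ ^ (-μ) := by
  have hB : 0 ≤ ∫ y, bubV n μ y := integral_nonneg fun y => (bubV_pos n μ y).le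
  have hA : 0 ≤ ∫ y, bubG n μ y := integral_nonneg fun y => bubG_nonneg n μ y
  set B := ∫ y, bubV n μ y with hBdef
  set A := ∫ y, bubG n μ y with hAdef
  refine ⟨2 ^ μ * (B + (δ / 2) ^ (μ - n) * A), by positivity, fun x hx => ?_⟩
  set r := ‖x‖ / 2 with hr
  have hr0 : 0 < r := by rw [hr]; linarith
  have hG := bubG_integrable n hn μ hμn
  have hi2 : Integrable (fun y : EuclideanSpace ℝ (Fin n) => bubG n μ (r⁻¹ • (x - y))) := by
    have := (integrable_comp_smul_iff volume (bubG n μ) (inv_ne_zero hr0.ne')).2 hG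
    exact this.comp_sub_left x
  have hI2 : ∫ y, bubG n μ (r⁻¹ • (x - y)) = r ^ (n:ℝ) * A := by
    rw [integral_sub_left_eq_self (fun y => bubG n μ (r⁻¹ • y)) volume x,
      Measure.integral_comp_smul_of_nonneg (μ := volume) (hR := by positivity)]
    simp
    exact Or.inl rfl
  have hi := ((bubV_integrable n μ hμn).const_mul (r ^ (-μ))).add
    (hi2.const_mul (r ^ (-(2 * (n:ℝ)))))
  have key : ∫ y, bubV n μ y * ‖x - y‖ ^ (-μ) ≤
      ∫ y, (r ^ (-μ) * bubV n μ y + r ^ (-(2 * (n:ℝ))) * bubG n μ (r⁻¹ • (x - y))) := by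
    refine integral_mono_of_nonneg (Filter.Eventually.of_forall fun y => ?_) hi
      (Filter.Eventually.of_forall fun y => ?_)
    · exact mul_nonneg (bubV_pos n μ y).le (by positivity)
    · have hv := bubV_pos n μ y
      have hg := bubG_nonneg n μ (r⁻¹ • (x - y))
      show bubV n μ y * ‖x - y‖ ^ (-μ) ≤
        r ^ (-μ) * bubV n μ y + r ^ (-(2 * (n:ℝ))) * bubG n μ (r⁻¹ • (x - y))
      by_cases h : ‖x - y‖ < r
      · have hy : r ≤ ‖y‖ := by
          have := norm_sub_norm_le x y
          linarith
        have h1 := bubV_le n μ hμn y r hr0 hy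
        have h2 : bubG n μ (r⁻¹ • (x - y)) = r ^ μ * ‖x - y‖ ^ (-μ) := by
          unfold bubG
          rw [norm_smul, Real.norm_of_nonneg (by positivity), if_pos,
            Real.mul_rpow (by positivity) (by positivity), Real.inv_rpow hr0.le,
            Real.rpow_neg hr0.le, inv_inv]
          rw [inv_mul_lt_iff₀ hr0]; linarith
        have h3 : r ^ (-(2 * (n:ℝ))) * (r ^ μ * ‖x - y‖ ^ (-μ)) =
            r ^ (-(2 * (n:ℝ) - μ)) * ‖x - y‖ ^ (-μ) := by
          rw [← mul_assoc, ← Real.rpow_add hr0]; congr 2; ring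
        rw [h2, h3]
        have h4 : bubV n μ y * ‖x - y‖ ^ (-μ) ≤ r ^ (-(2 * (n:ℝ) - μ)) * ‖x - y‖ ^ (-μ) :=
          mul_le_mul_of_nonneg_right h1 (by positivity)
        have : 0 ≤ r ^ (-μ) * bubV n μ y := by positivity
        linarith
      · have h1 : ‖x - y‖ ^ (-μ) ≤ r ^ (-μ) :=
          Real.rpow_le_rpow_of_nonpos hr0 (not_lt.1 h) (by linarith)
        have h2 : 0 ≤ r ^ (-(2 * (n:ℝ))) * bubG n μ (r⁻¹ • (x - y)) := by positivity
        nlinarith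
  refine key.trans ?_
  rw [integral_add ((bubV_integrable n μ hμn).const_mul _) (hi2.const_mul _),
    integral_const_mul, integral_const_mul, hI2, ← hBdef]
  have e1 : ‖x‖ ^ (-μ) * 2 ^ μ = r ^ (-μ) := by
    rw [hr, Real.div_rpow (by positivity) (by norm_num), Real.rpow_neg (by norm_num : (0:ℝ) ≤ 2),
      div_inv_eq_mul]
  have e2 : r ^ (-(2 * (n:ℝ))) * (r ^ (n:ℝ) * A) = r ^ (-μ) * (r ^ (μ - n) * A) := by
    rw [← mul_assoc, ← mul_assoc, ← Real.rpow_add hr0, ← Real.rpow_add hr0]; congr 2; ring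
  have e3 : r ^ (μ - n) ≤ (δ / 2) ^ (μ - n) :=
    Real.rpow_le_rpow_of_nonpos (by positivity) (by rw [hr]; linarith) (by linarith)
  calc r ^ (-μ) * B + r ^ (-(2 * (n:ℝ))) * (r ^ (n:ℝ) * A)
      = r ^ (-μ) * (B + r ^ (μ - n) * A) := by rw [e2]; ring
    _ ≤ r ^ (-μ) * (B + (δ / 2) ^ (μ - n) * A) := by gcongr
    _ = _ := by rw [← e1]; ring

/-- Tail of the Choquard energy. -/
lemma bub_tail (n : ℕ) (hn : 1 ≤ n) (μ : ℝ) (hμ0 : 0 < μ) (hμn : μ < n) (δ : ℝ) (hδ : 0 < δ) :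
    ∃ C : ℝ, 0 ≤ C ∧ ∀ ε : ℝ, 0 < ε → ε < 1 →
      ∫ z, {z : EuclideanSpace ℝ (Fin n) × EuclideanSpace ℝ (Fin n) |
        δ / ε < ‖z.1‖}.indicator (bubK n μ) z ∂(volume.prod volume) ≤ C * ε ^ (n : ℝ) := by
  obtain ⟨C, hC, hW⟩ := bubW_bound n hn μ hμ0 hμn δ hδ
  have hD : 0 ≤ ∫ y, bubT n y := integral_nonneg fun y => bubT_nonneg n y
  set D := ∫ y, bubT n y with hDdef
  refine ⟨C * D * δ ^ (-(n:ℝ)), by positivity, fun ε hε hε1 => ?_⟩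
  have hms : MeasurableSet {z : EuclideanSpace ℝ (Fin n) × EuclideanSpace ℝ (Fin n) |
        δ / ε < ‖z.1‖} := measurableSet_lt measurable_const measurable_fst.norm
  rw [integral_prod _ ((bubK_integrable n hn μ hμ0 hμn).indicator hms)]
  set R := δ / ε with hR
  have hR0 : 0 < R := by positivity
  have hRδ : δ ≤ R := by rw [hR, le_div_iff₀ hε]; nlinarith
  have hiT : Integrable (fun y : EuclideanSpace ℝ (Fin n) => bubT n (R⁻¹ • y)) :=
    (integrable_comp_smul_iff volume (bubT n) (inv_ne_zero hR0.ne')).2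
      (bubT_integrable n hn)
  have hIT : ∫ y, bubT n (R⁻¹ • y) = R ^ (n:ℝ) * D := by
    rw [Measure.integral_comp_smul_of_nonneg (μ := volume) (hR := by positivity)]
    simp
    exact Or.inl rfl
  have key : ∫ x : EuclideanSpace ℝ (Fin n), ∫ y : EuclideanSpace ℝ (Fin n),
      {z : EuclideanSpace ℝ (Fin n) × EuclideanSpace ℝ (Fin n) |
        R < ‖z.1‖}.indicator (bubK n μ) (x, y) ≤
      ∫ x, (C * R ^ (-(2 * (n:ℝ)))) * bubT n (R⁻¹ • x) := by
    refine integral_mono_of_nonneg (Filter.Eventually.of_forall fun x => ?_) (hiT.const_mul _)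
      (Filter.Eventually.of_forall fun x => ?_)
    · exact integral_nonneg fun y => Set.indicator_nonneg (fun z _ => bubK_nonneg n μ z) _
    · show ∫ y : EuclideanSpace ℝ (Fin n),
        {z : EuclideanSpace ℝ (Fin n) × EuclideanSpace ℝ (Fin n) |
        R < ‖z.1‖}.indicator (bubK n μ) (x, y) ≤ (C * R ^ (-(2 * (n:ℝ)))) * bubT n (R⁻¹ • x)
      by_cases h : R < ‖x‖
      · have hx0 : 0 < ‖x‖ := hR0.trans h
        have h1 : ∀ y : EuclideanSpace ℝ (Fin n),
            {z : EuclideanSpace ℝ (Fin n) × EuclideanSpace ℝ (Fin n) |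
              R < ‖z.1‖}.indicator (bubK n μ) (x, y) =
            bubV n μ x * (bubV n μ y * ‖x - y‖ ^ (-μ)) := by
          intro y
          rw [Set.indicator_of_mem (by simpa using h)]
          unfold bubK; ring
        simp_rw [h1]
        rw [integral_const_mul]
        have h2 := hW x (by linarith)
        have h3 := bubV_le n μ hμn x ‖x‖ hx0 le_rfl
        have h4 : bubT n (R⁻¹ • x) = R ^ (2 * (n:ℝ)) * ‖x‖ ^ (-(2 * (n:ℝ))) := by
          unfold bubT
          rw [norm_smul, Real.norm_of_nonneg (by positivity), if_pos,
            Real.mul_rpow (by positivity) (by positivity), Real.inv_rpow hR0.le,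
            Real.rpow_neg hR0.le, inv_inv]
          rw [lt_inv_mul_iff₀ hR0]; linarith
        have h5 : R ^ (-(2 * (n:ℝ))) * R ^ (2 * (n:ℝ)) = 1 := by
          rw [← Real.rpow_add hR0]; simp
        rw [h4]
        calc bubV n μ x * ∫ y, bubV n μ y * ‖x - y‖ ^ (-μ)
            ≤ bubV n μ x * (C * ‖x‖ ^ (-μ)) :=
              mul_le_mul_of_nonneg_left h2 (bubV_pos n μ x).le
          _ ≤ ‖x‖ ^ (-(2 * (n : ℝ) - μ)) * (C * ‖x‖ ^ (-μ)) :=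
              mul_le_mul_of_nonneg_right h3 (by positivity)
          _ = C * (‖x‖ ^ (-(2 * (n : ℝ) - μ)) * ‖x‖ ^ (-μ)) := by ring
          _ = C * ‖x‖ ^ (-(2 * (n:ℝ))) := by
              rw [← Real.rpow_add hx0]; congr 2; ring
          _ = C * (R ^ (-(2 * (n:ℝ))) * R ^ (2 * (n:ℝ))) * ‖x‖ ^ (-(2 * (n:ℝ))) := by
              rw [h5, mul_one]
          _ = _ := by ring
      · have h1 : ∀ y : EuclideanSpace ℝ (Fin n),
            {z : EuclideanSpace ℝ (Fin n) × EuclideanSpace ℝ (Fin n) |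
              R < ‖z.1‖}.indicator (bubK n μ) (x, y) = 0 := by
          intro y
          rw [Set.indicator_of_notMem (by simpa using h)]
        simp_rw [h1]
        have := bubT_nonneg n (R⁻¹ • x)
        simp only [integral_zero]
        positivity
  refine key.trans (le_of_eq ?_)
  rw [integral_const_mul, hIT]
  have e1 : R ^ (-(2 * (n:ℝ))) * R ^ (n:ℝ) = δ ^ (-(n:ℝ)) * ε ^ (n:ℝ) := by
    rw [← Real.rpow_add hR0, hR, Real.div_rpow hδ.le hε.le]
    have : -(2 * (n:ℝ)) + n = -(n:ℝ) := by ring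
    rw [this, Real.rpow_neg hε.le, div_inv_eq_mul]
  calc C * R ^ (-(2 * (n:ℝ))) * (R ^ (n:ℝ) * D)
      = C * D * (R ^ (-(2 * (n:ℝ))) * R ^ (n:ℝ)) := by ring
    _ = _ := by rw [e1]; ring

lemma bub_main (n : ℕ) (hn : 1 ≤ n) (μ : ℝ) (hμ0 : 0 < μ) (hμn : μ < n) (δ : ℝ) (hδ : 0 < δ) :
    ∃ C : ℝ, 0 < C ∧ ∀ ε : ℝ, 0 < ε → ε < 1 → ∀ φ : EuclideanSpace ℝ (Fin n) → ℝ,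
      Measurable φ → (∀ x, 0 ≤ φ x) → (∀ x, φ x ≤ 1) → (∀ x, ‖x‖ ≤ δ / ε → φ x = 1) →
      |(∫ x, ∫ y, φ x * φ y * bubK n μ (x, y)) - ∫ x, ∫ y, bubK n μ (x, y)| ≤
        C * ε ^ (n : ℝ) := by
  obtain ⟨C, hC, hT⟩ := bub_tail n hn μ hμ0 hμn δ hδ
  refine ⟨2 * C + 1, by positivity, fun ε hε hε1 φ hφm hφ0 hφ1 hφ => ?_⟩
  have hT := hT ε hε hε1
  have hK := bubK_integrable n hn μ hμ0 hμn
  have hφK : Integrable (fun z : EuclideanSpace ℝ (Fin n) × EuclideanSpace ℝ (Fin n) =>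
      φ z.1 * φ z.2 * bubK n μ z) (volume.prod volume) := by
    refine hK.bdd_mul (c := 1) (Measurable.aestronglyMeasurable (by fun_prop))
      (Filter.Eventually.of_forall fun z => ?_)
    rw [Real.norm_of_nonneg (mul_nonneg (hφ0 _) (hφ0 _))]
    exact mul_le_one₀ (hφ1 _) (hφ0 _) (hφ1 _)
  set S := {z : EuclideanSpace ℝ (Fin n) × EuclideanSpace ℝ (Fin n) | δ / ε < ‖z.1‖} with hS
  have hms : MeasurableSet S := measurableSet_lt measurable_const measurable_fst.norm
  have hiS : Integrable (S.indicator (bubK n μ)) (volume.prod volume) := hK.indicator hms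
  have hsw : ∫ z, S.indicator (bubK n μ) z.swap ∂(volume.prod volume) =
      ∫ z, S.indicator (bubK n μ) z ∂(volume.prod volume) :=
    integral_prod_swap (S.indicator (bubK n μ))
  rw [← integral_prod _ hφK, ← integral_prod _ hK, ← integral_sub hφK hK]
  have hb : ‖∫ z, (φ z.1 * φ z.2 * bubK n μ z - bubK n μ z) ∂(volume.prod volume)‖ ≤
      ∫ z, (S.indicator (bubK n μ) z + S.indicator (bubK n μ) z.swap) ∂(volume.prod volume) := by
    refine norm_integral_le_of_norm_le (hiS.add hiS.swap)
      (Filter.Eventually.of_forall fun z => ?_)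
    have hk := bubK_nonneg n μ z
    have hks : bubK n μ z.swap = bubK n μ z := by
      unfold bubK
      simp only [Prod.fst_swap, Prod.snd_swap]
      rw [norm_sub_rev, mul_comm (bubV n μ z.2)]
    have a1 : 0 ≤ S.indicator (bubK n μ) z :=
      Set.indicator_nonneg (fun z _ => bubK_nonneg n μ z) _
    have a2 : 0 ≤ S.indicator (bubK n μ) z.swap :=
      Set.indicator_nonneg (fun z _ => bubK_nonneg n μ z) _
    have hp0 := mul_nonneg (hφ0 z.1) (hφ0 z.2)
    have hp1 := mul_le_one₀ (hφ1 z.1) (hφ0 z.2) (hφ1 z.2)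
    have hd : ‖φ z.1 * φ z.2 * bubK n μ z - bubK n μ z‖ ≤ bubK n μ z := by
      rw [Real.norm_eq_abs, abs_le]; constructor <;> nlinarith
    by_cases h1 : z ∈ S
    · rw [Set.indicator_of_mem h1]; linarith
    · by_cases h2 : z.swap ∈ S
      · rw [Set.indicator_of_mem h2, hks]; linarith
      · have e1 : φ z.1 = 1 := hφ _ (by simpa [hS] using h1)
        have e2 : φ z.2 = 1 := hφ _ (by simpa [hS] using h2)
        rw [e1, e2]; simp only [one_mul, sub_self, norm_zero]; linarith
  have hadd : ∫ z, (S.indicator (bubK n μ) z + S.indicator (bubK n μ) z.swap) ∂(volume.prod volume) =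
      (∫ z, S.indicator (bubK n μ) z ∂(volume.prod volume)) +
        ∫ z, S.indicator (bubK n μ) z.swap ∂(volume.prod volume) := integral_add hiS hiS.swap
  rw [hadd, hsw] at hb
  have : 0 < ε ^ (n:ℝ) := by positivity
  rw [← Real.norm_eq_abs]
  nlinarith

end

/-- The critical Choquard energy of the truncated bubble differs from that of the
full bubble by at most `O(εⁿ)`. -/
theorem statement15 (n : ℕ) (hn : 3 ≤ n) (μ : ℝ) (hμ0 : 0 < μ) (hμn : μ < n)
    (δ : ℝ) (hδ : 0 < δ)
    (ψ : EuclideanSpace ℝ (Fin n) → ℝ) (hψ : ContDiff ℝ (⊤ : ℕ∞) ψ)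
    (hψ0 : ∀ x, 0 ≤ ψ x) (hψ1 : ∀ x, ψ x ≤ 1)
    (hψin : ∀ x : EuclideanSpace ℝ (Fin n), ‖x‖ ≤ δ → ψ x = 1)
    (hψout : ∀ x : EuclideanSpace ℝ (Fin n), 2 * δ ≤ ‖x‖ → ψ x = 0) :
    ∃ C : ℝ, 0 < C ∧ ∀ ε : ℝ, 0 < ε → ε < 1 →
      |(∫ x : EuclideanSpace ℝ (Fin n), ∫ y : EuclideanSpace ℝ (Fin n),
          (ψ x * (ε / (ε ^ 2 + ‖x‖ ^ 2)) ^ (((n : ℝ) - 2) / 2)) ^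
              ((2 * (n : ℝ) - μ) / ((n : ℝ) - 2)) *
            (ψ y * (ε / (ε ^ 2 + ‖y‖ ^ 2)) ^ (((n : ℝ) - 2) / 2)) ^
              ((2 * (n : ℝ) - μ) / ((n : ℝ) - 2)) / ‖x - y‖ ^ μ) -
        (∫ x : EuclideanSpace ℝ (Fin n), ∫ y : EuclideanSpace ℝ (Fin n),
          (((1 : ℝ) / (1 + ‖x‖ ^ 2)) ^ (((n : ℝ) - 2) / 2)) ^
              ((2 * (n : ℝ) - μ) / ((n : ℝ) - 2)) *
            (((1 : ℝ) / (1 + ‖y‖ ^ 2)) ^ (((n : ℝ) - 2) / 2)) ^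
              ((2 * (n : ℝ) - μ) / ((n : ℝ) - 2)) / ‖x - y‖ ^ μ)| ≤
        C * ε ^ (n : ℝ) := by
  obtain ⟨C, hC, hmain⟩ := bub_main n (by omega) μ hμ0 hμn δ hδ
  refine ⟨C, hC, fun ε hε hε1 => ?_⟩
  have hn3 : (3:ℝ) ≤ n := by exact_mod_cast hn
  have hn2 : (n:ℝ) - 2 ≠ 0 := by linarith
  set p := (2 * (n : ℝ) - μ) / ((n : ℝ) - 2) with hp
  have hp0 : 0 < p := div_pos (by linarith) (by linarith)
  have hpq : ((n : ℝ) - 2) / 2 * p = (2 * (n:ℝ) - μ) / 2 := by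
    rw [hp]; field_simp
  have hV : ∀ x : EuclideanSpace ℝ (Fin n),
      (((1 : ℝ) / (1 + ‖x‖ ^ 2)) ^ (((n : ℝ) - 2) / 2)) ^ p = bubV n μ x := by
    intro x
    rw [← Real.rpow_mul (by positivity), hpq, one_div, Real.inv_rpow (by positivity),
      ← Real.rpow_neg (by positivity)]
    unfold bubV; congr 1; ring
  have hU : ∀ x : EuclideanSpace ℝ (Fin n),
      (ψ (ε • x) * (ε / (ε ^ 2 + ‖ε • x‖ ^ 2)) ^ (((n : ℝ) - 2) / 2)) ^ p =
        ε ^ (-((2 * (n:ℝ) - μ) / 2)) * (ψ (ε • x) ^ p * bubV n μ x) := by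
    intro x
    have h1 : ε / (ε ^ 2 + ‖ε • x‖ ^ 2) = ε⁻¹ * (1 / (1 + ‖x‖ ^ 2)) := by
      rw [norm_smul, Real.norm_of_nonneg hε.le]
      have : 1 + ‖x‖ ^ 2 ≠ 0 := by positivity
      field_simp
    rw [Real.mul_rpow (hψ0 _) (by positivity), h1, Real.mul_rpow (by positivity) (by positivity),
      Real.mul_rpow (by positivity) (by positivity), hV, ← Real.rpow_mul (by positivity), hpq,
      Real.inv_rpow hε.le, ← Real.rpow_neg hε.le]
    ring
  have hsec : ∀ x y : EuclideanSpace ℝ (Fin n),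
      bubV n μ x * bubV n μ y / ‖x - y‖ ^ μ = bubK n μ (x, y) := by
    intro x y
    unfold bubK
    rw [Real.rpow_neg (norm_nonneg _), div_eq_mul_inv]
  simp_rw [hV, hsec]
  have hscale : ∀ F : EuclideanSpace ℝ (Fin n) → EuclideanSpace ℝ (Fin n) → ℝ,
      ∫ x, ∫ y, F x y = ε ^ (2 * (n:ℝ)) * ∫ x, ∫ y, F (ε • x) (ε • y) := by
    intro F
    have h1 : ∀ x, ∫ y, F x (ε • y) = (ε ^ n)⁻¹ * ∫ y, F x y := by
      intro x
      rw [Measure.integral_comp_smul_of_nonneg (μ := volume) (hR := hε.le)]; simp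
    simp_rw [h1]
    rw [integral_const_mul,
      Measure.integral_comp_smul_of_nonneg (μ := volume) (hR := hε.le) (f := fun x => ∫ y, F x y)]
    have h2 : ε ^ (2 * (n:ℝ)) = ε ^ n * ε ^ n := by
      rw [two_mul, Real.rpow_add hε, Real.rpow_natCast]
    rw [h2]
    simp only [finrank_euclideanSpace, Fintype.card_fin, smul_eq_mul]
    have : ε ^ n ≠ 0 := by positivity
    field_simp
  rw [hscale]
  simp_rw [hU]
  have hk : ∀ x y : EuclideanSpace ℝ (Fin n),
      ε ^ (-((2 * (n:ℝ) - μ) / 2)) * (ψ (ε • x) ^ p * bubV n μ x) *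
        (ε ^ (-((2 * (n:ℝ) - μ) / 2)) * (ψ (ε • y) ^ p * bubV n μ y)) / ‖ε • x - ε • y‖ ^ μ =
      ε ^ (-(2 * (n:ℝ))) * (ψ (ε • x) ^ p * ψ (ε • y) ^ p * bubK n μ (x, y)) := by
    intro x y
    rw [← smul_sub, norm_smul, Real.norm_of_nonneg hε.le, Real.mul_rpow hε.le (norm_nonneg _),
      ← hsec]
    have : ε ^ (-(2 * (n:ℝ))) = ε ^ (-((2 * (n:ℝ) - μ) / 2)) * ε ^ (-((2 * (n:ℝ) - μ) / 2))
        * (ε ^ μ)⁻¹ := by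
      rw [← Real.rpow_neg hε.le, ← Real.rpow_add hε, ← Real.rpow_add hε]; congr 1; ring
    rw [this, div_eq_mul_inv, div_eq_mul_inv, mul_inv]
    ring
  simp_rw [hk, integral_const_mul]
  rw [← mul_assoc, ← Real.rpow_add hε, add_neg_cancel, Real.rpow_zero, one_mul]
  refine hmain ε hε hε1 (fun x => ψ (ε • x) ^ p) ?_ (fun x => Real.rpow_nonneg (hψ0 _) _)
    (fun x => Real.rpow_le_one (hψ0 _) (hψ1 _) hp0.le) (fun x hx => ?_)
  · have := hψ.continuous.measurable
    fun_prop
  · have : ψ (ε • x) = 1 := by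
      apply hψin
      rw [norm_smul, Real.norm_of_nonneg hε.le]
      rw [le_div_iff₀ hε] at hx; linarith
    simp only [this, Real.one_rpow]
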